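/- arXiv:1001.4729 — 3 statements merged into one kernel-verified Lean document; each statement's English description precedes it below -/
import Mathlib

section
/- Assume f satisfies (f1) and (f2). Let u be a C² solution of (E) on (0,∞) and let φ be a C¹ function on (0,∞), not identically zero, satisfying the linearized equation φ''(r) + ((n−1)/r)φ'(r) + f'(u(r))φ(r) = 0 at every r with u(r) ≠ 0. If r₁ < r₂ are two consecutive zeros of u' (i.e., u'(r₁) = u'(r₂) = 0 and u'(r) ≠ 0 for r ∈ (r₁,r₂)), then φ has at least one zero in (r₁,r₂). -/
open Set Filter MeasureTheory

namespace Paper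

noncomputable section

/-- `F s = ∫₀ˢ f t dt`. -/
def Fint (f : ℝ → ℝ) (s : ℝ) : ℝ := ∫ t in (0:ℝ)..s, f t

/-- Hypothesis (f1): `f` is odd, `f 0 = 0`, there are `β > b > 0` with `f > 0` on `(b,∞)`,
`f ≤ 0`, `f ≢ 0` on `[0,b]`, and `F β = 0`. -/
def Hf1 (f : ℝ → ℝ) (b β : ℝ) : Prop :=
  (∀ s, f (-s) = -f s) ∧ f 0 = 0 ∧ 0 < b ∧ b < β ∧
    (∀ s, b < s → 0 < f s) ∧ (∀ s ∈ Icc (0:ℝ) b, f s ≤ 0) ∧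
    (∃ s ∈ Icc (0:ℝ) b, f s ≠ 0) ∧ Fint f β = 0

/-- Hypothesis (f2): `f` continuous on `[0,∞)`, C¹ on `(0,∞)`, `f' ∈ L¹(0,1)`. -/
def Hf2 (f : ℝ → ℝ) : Prop :=
  ContinuousOn f (Ici 0) ∧ (∀ s : ℝ, 0 < s → DifferentiableAt ℝ f s) ∧
    ContinuousOn (deriv f) (Ioi 0) ∧ IntegrableOn (deriv f) (Ioo 0 1)

/-- Hypothesis (f3): `f s ≥ f' s * (s - β)` for `s ≥ β`. -/
def Hf3 (f : ℝ → ℝ) (β : ℝ) : Prop := ∀ s, β ≤ s → deriv f s * (s - β) ≤ f s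

/-- Hypothesis (f4): `(F/f)' s ≥ (n-2)/(2n)` for `s > β`. -/
def Hf4 (n : ℕ) (f : ℝ → ℝ) (β : ℝ) : Prop :=
  ∀ s, β < s → ((n : ℝ) - 2) / (2 * (n : ℝ)) ≤ deriv (fun t => Fint f t / f t) s

/-- Hypothesis (f4'): `(F/f)' s ≥ (n-2)/2` for `s > β`. -/
def Hf4' (n : ℕ) (f : ℝ → ℝ) (β : ℝ) : Prop :=
  ∀ s, β < s → ((n : ℝ) - 2) / 2 ≤ deriv (fun t => Fint f t / f t) s

/-- Hypothesis (f5): `s ↦ s f' s / f s` is nonincreasing on `[β,∞)`. -/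
def Hf5 (f : ℝ → ℝ) (β : ℝ) : Prop := AntitoneOn (fun s => s * deriv f s / f s) (Ici β)

/-- Hypothesis (f6): `β f' β / f β ≤ n/(n-2)`. -/
def Hf6 (n : ℕ) (f : ℝ → ℝ) (β : ℝ) : Prop := β * deriv f β / f β ≤ (n : ℝ) / ((n : ℝ) - 2)

/-- Hypothesis (f1'): `f 0 = 0` and `s f s > 0` for `s > 0`. -/
def Hf1' (f : ℝ → ℝ) : Prop := f 0 = 0 ∧ ∀ s : ℝ, 0 < s → 0 < s * f s

/-- Hypothesis (f3'): `f s ≥ s f' s` for `s > 0`, with strict inequality at points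
arbitrarily close to `0`. -/
def Hf3' (f : ℝ → ℝ) : Prop :=
  (∀ s : ℝ, 0 < s → s * deriv f s ≤ f s) ∧
    ∀ ε : ℝ, 0 < ε → ∃ s ∈ Ioo (0:ℝ) ε, s * deriv f s < f s

/-- `v` is a C² solution of (E) on `(0,∞)`, continuous on `[0,∞)`,
with `v 0 = α` and `v' 0 = 0`. -/
def IVPsol (n : ℕ) (f : ℝ → ℝ) (α : ℝ) (v : ℝ → ℝ) : Prop :=
  v 0 = α ∧ deriv v 0 = 0 ∧ ContinuousOn v (Ici 0) ∧
    (∀ r : ℝ, 0 < r → DifferentiableAt ℝ v r ∧ DifferentiableAt ℝ (deriv v) r) ∧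
    (∀ r : ℝ, 0 < r → deriv (deriv v) r + ((n : ℝ) - 1) / r * deriv v r + f (v r) = 0)

/-- The family `α ↦ u α` of solutions of the IVP, with `u α r` and `u' α r`
continuous in `(α, r)`. -/
def Family (n : ℕ) (f : ℝ → ℝ) (u : ℝ → ℝ → ℝ) : Prop :=
  (∀ α : ℝ, 0 < α → IVPsol n f α (u α)) ∧
    ContinuousOn (fun p : ℝ × ℝ => u p.1 p.2) (Ioi 0 ×ˢ Ici 0) ∧
    ContinuousOn (fun p : ℝ × ℝ => deriv (u p.1) p.2) (Ioi 0 ×ˢ Ici 0)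

/-- The set whose supremum is `Z_k α`, given `T = T_{k-1} α`. -/
def ZsetAux (u : ℝ → ℝ → ℝ) (k : ℕ) (T α : ℝ) : Set ℝ :=
  {r | T < r ∧ ∀ s ∈ Ioo T r, (-1 : ℝ) ^ k * u α s < 0 ∧ 0 < (-1 : ℝ) ^ k * deriv (u α) s}

/-- The pair `(Z_k, T_k)`, with `T₀ = 0`;
`Z_k α = sup {r > T_{k-1} α | (-1)^k u < 0, (-1)^k u' > 0 on (T_{k-1} α, r)}` and
`T_k α = inf {r > Z_k α | u'(r, α) = 0}`. -/
def ZT (u : ℝ → ℝ → ℝ) : ℕ → (ℝ → ℝ) × (ℝ → ℝ)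
  | 0 => (fun _ => 0, fun _ => 0)
  | k + 1 =>
    let Z : ℝ → ℝ := fun α => sSup (ZsetAux u (k + 1) ((ZT u k).2 α) α)
    (Z, fun α => sInf {r | Z α < r ∧ deriv (u α) r = 0})

/-- `Z_k α` (as a real number; the genuine value when the defining set is bounded above). -/
def Zk (u : ℝ → ℝ → ℝ) (k : ℕ) (α : ℝ) : ℝ := (ZT u k).1 α

/-- `T_k α`, with `T₀ = 0`. -/
def Tk (u : ℝ → ℝ → ℝ) (k : ℕ) (α : ℝ) : ℝ := (ZT u k).2 α

/-- The defining set of `Z_k α`; `Z_k α = ∞` iff this set is unbounded above. -/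
def ZsetK (u : ℝ → ℝ → ℝ) (k : ℕ) (α : ℝ) : Set ℝ := ZsetAux u k (Tk u (k - 1) α) α

open Classical in
/-- The value of `u (·, α)` at `Z_k α`, as a limit `r → ∞` when `Z_k α = ∞`. -/
def uAtZ (u : ℝ → ℝ → ℝ) (k : ℕ) (α : ℝ) : ℝ :=
  if BddAbove (ZsetK u k α) then u α (Zk u k α) else limUnder atTop (u α)

open Classical in
/-- The value of `u' (·, α)` at `Z_k α`, as a limit `r → ∞` when `Z_k α = ∞`. -/
def duAtZ (u : ℝ → ℝ → ℝ) (k : ℕ) (α : ℝ) : ℝ :=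
  if BddAbove (ZsetK u k α) then deriv (u α) (Zk u k α) else limUnder atTop (deriv (u α))

open Classical in
/-- `Z_k α` as an extended real number. -/
def ZkE (u : ℝ → ℝ → ℝ) (k : ℕ) (α : ℝ) : WithTop ℝ :=
  if BddAbove (ZsetK u k α) then (Zk u k α : WithTop ℝ) else ⊤

/-- Membership in `F̃_k` (for `α ∈ N_{k-1}`): `(-1)^k u' (r, α) < 0` for all `r > Z_{k-1} α`. -/
def Ftil (u : ℝ → ℝ → ℝ) (k : ℕ) (α : ℝ) : Prop :=
  ∀ r, Zk u (k - 1) α < r → (-1 : ℝ) ^ k * deriv (u α) r < 0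

/-- The sets `N_k` (with `N₀ := (0,∞)`). -/
def Nk (u : ℝ → ℝ → ℝ) : ℕ → Set ℝ
  | 0 => Ioi 0
  | 1 => {α | 0 < α ∧ uAtZ u 1 α = 0 ∧ duAtZ u 1 α < 0}
  | k + 2 => {α | α ∈ Nk u (k + 1) ∧ ¬Ftil u (k + 2) α ∧ uAtZ u (k + 2) α = 0 ∧
      0 < (-1 : ℝ) ^ (k + 2) * duAtZ u (k + 2) α}

/-- The sets `G_k`. -/
def Gk (u : ℝ → ℝ → ℝ) : ℕ → Set ℝ
  | 0 => ∅
  | 1 => {α | 0 < α ∧ uAtZ u 1 α = 0 ∧ duAtZ u 1 α = 0}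
  | k + 2 => {α | α ∈ Nk u (k + 1) ∧ ¬Ftil u (k + 2) α ∧ uAtZ u (k + 2) α = 0 ∧
      duAtZ u (k + 2) α = 0}

/-- The set `F̃_k` (for `k ≥ 2`). -/
def FtilSet (u : ℝ → ℝ → ℝ) (k : ℕ) : Set ℝ := {α | α ∈ Nk u (k - 1) ∧ Ftil u k α}

/-- The set `F_k` (for `k ≥ 2`). -/
def Fk (u : ℝ → ℝ → ℝ) (k : ℕ) : Set ℝ :=
  {α | α ∈ Nk u (k - 1) ∧ ¬Ftil u k α ∧ (-1 : ℝ) ^ k * uAtZ u k α < 0}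

/-- The sets `P_k`. -/
def Pk (u : ℝ → ℝ → ℝ) : ℕ → Set ℝ
  | 0 => ∅
  | 1 => {α | 0 < α ∧ 0 < uAtZ u 1 α}
  | k + 2 => FtilSet u (k + 2) ∪ Fk u (k + 2)

/-- The set of extremal points (zeros of `u' (·, α)`) in `[0, A]`. -/
def ExtSet (u : ℝ → ℝ → ℝ) (α A : ℝ) : Set ℝ := {r | r ∈ Icc 0 A ∧ deriv (u α) r = 0}

/-- The conclusion of the δ₁-lemma (Lemma 4.1): every solution with initial value in
`(α*-δ₁, α*+δ₁)` has exactly `k` extremal points in `[0, T_{k-1}(α*) + a]`, with minimum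
values `< -β` and maximum values `> β`; moreover any two such solutions intersect between
any two of their consecutive extremal points, and in `(T_{k-1}(α*), Z_k(α*))`. -/
def DeltaOneLemma (f : ℝ → ℝ) (β : ℝ) (u : ℝ → ℝ → ℝ) (k : ℕ) (αs a δ₁ : ℝ) : Prop :=
  0 < a ∧ 0 < δ₁ ∧
    (∀ α ∈ Ioo (αs - δ₁) (αs + δ₁),
      (ExtSet u α (Tk u (k - 1) αs + a)).Finite ∧
        (ExtSet u α (Tk u (k - 1) αs + a)).ncard = k ∧
        ∀ r ∈ ExtSet u α (Tk u (k - 1) αs + a),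
          (IsLocalMin (u α) r → u α r < -β) ∧ (IsLocalMax (u α) r → β < u α r)) ∧
    ∀ α₁ ∈ Ioo (αs - δ₁) (αs + δ₁), ∀ α₂ ∈ Ioo (αs - δ₁) (αs + δ₁), α₁ < α₂ →
      (∀ i : ℕ, 1 ≤ i → i ≤ k - 1 →
        ∃ t, max (Tk u (i - 1) α₁) (Tk u (i - 1) α₂) < t ∧
          t < min (Tk u i α₁) (Tk u i α₂) ∧ u α₁ t = u α₂ t) ∧
      ∃ t, Tk u (k - 1) αs < t ∧ (BddAbove (ZsetK u k αs) → t < Zk u k αs) ∧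
        u α₁ t = u α₂ t

/-- `ρ` is the inverse of the monotone branch of `v` on `[t₁, t₂]`, whose set of values
is `[m, M]`. -/
def InvBranch (v ρ : ℝ → ℝ) (t₁ t₂ m M : ℝ) : Prop :=
  (∀ s ∈ Icc m M, ρ s ∈ Icc t₁ t₂ ∧ v (ρ s) = s) ∧
    ∀ s ∈ Ioo m M, HasDerivAt ρ (1 / deriv v (ρ s)) s

/-- `ρ` inverts a decreasing branch of `v` over the value interval `[m, M]`, along which
`(v')² + 2F > 0`. -/
def DecBranchInv (f : ℝ → ℝ) (v ρ : ℝ → ℝ) (m M : ℝ) : Prop :=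
  ∀ s ∈ Icc m M, 0 ≤ ρ s ∧ v (ρ s) = s ∧ deriv v (ρ s) < 0 ∧
    HasDerivAt ρ (1 / deriv v (ρ s)) s ∧ 0 < (deriv v (ρ s)) ^ 2 + 2 * Fint f s

/-- The functional `Q(s) = -4 (F/f)(s) r/r' - r²/(r')² - 2 r² F(s) + H(s)` computed along
the branch inverse `ρ`. -/
def Qfun (f H ρ : ℝ → ℝ) (s : ℝ) : ℝ :=
  -4 * (Fint f s / f s) * (ρ s / deriv ρ s) - (ρ s) ^ 2 / (deriv ρ s) ^ 2 -
    2 * (ρ s) ^ 2 * Fint f s + H s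

/-- The functional `P(s) = -2n (F/f)(s) r^{n-1}/r' - r^n/(r')² - 2 r^n F(s)`. -/
def Pfun (n : ℕ) (f : ℝ → ℝ) (ρ : ℝ → ℝ) (s : ℝ) : ℝ :=
  -(2 * (n : ℝ)) * (Fint f s / f s) * (ρ s ^ (n - 1) / deriv ρ s) -
    ρ s ^ n / (deriv ρ s) ^ 2 - 2 * ρ s ^ n * Fint f s

/-- The functional `W(s) = r(s) √((u'(r(s)))² + 2 F(s))`. -/
def Wfun (f v ρ : ℝ → ℝ) (s : ℝ) : ℝ :=
  ρ s * Real.sqrt ((deriv v (ρ s)) ^ 2 + 2 * Fint f s)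

/-- The functional `W̃(s) = r(s)^{n-1} √((u'(r(s)))² + 2 F(s))`. -/
def Wtil (n : ℕ) (f : ℝ → ℝ) (v ρ : ℝ → ℝ) (s : ℝ) : ℝ :=
  ρ s ^ (n - 1) * Real.sqrt ((deriv v (ρ s)) ^ 2 + 2 * Fint f s)

/-- `v` changes sign at `z ∈ (0,∞)`: `v z = 0` and `v` takes both signs in every
neighborhood of `z` (within `(0,∞)`). -/
def SignChange (v : ℝ → ℝ) (z : ℝ) : Prop :=
  v z = 0 ∧ ∀ ε : ℝ, 0 < ε →
    (∃ x ∈ Ioo (z - ε) (z + ε) ∩ Ioi 0, 0 < v x) ∧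
    (∃ x ∈ Ioo (z - ε) (z + ε) ∩ Ioi 0, v x < 0)

/-- `v` has exactly `m` sign changes in `(0,∞)`. -/
def ExactSignChanges (v : ℝ → ℝ) (m : ℕ) : Prop :=
  {z | 0 < z ∧ SignChange v z}.Finite ∧ {z | 0 < z ∧ SignChange v z}.ncard = m

/-- Bound state: a C² solution of (E) on `(0,∞)` with `v' 0 = 0` and `v r → 0` as `r → ∞`. -/
def BoundState (n : ℕ) (f : ℝ → ℝ) (v : ℝ → ℝ) : Prop :=
  ContinuousOn v (Ici 0) ∧
    (∀ r : ℝ, 0 < r → DifferentiableAt ℝ v r ∧ DifferentiableAt ℝ (deriv v) r) ∧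
    (∀ r : ℝ, 0 < r → deriv (deriv v) r + ((n : ℝ) - 1) / r * deriv v r + f (v r) = 0) ∧
    deriv v 0 = 0 ∧ Tendsto v atTop (nhds 0)

/-- Solution of the Dirichlet problem on the ball of radius `R`. -/
def DirichletSol (n : ℕ) (f : ℝ → ℝ) (R : ℝ) (v : ℝ → ℝ) : Prop :=
  ContinuousOn v (Icc 0 R) ∧
    (∀ r ∈ Ioo (0:ℝ) R, DifferentiableAt ℝ v r ∧ DifferentiableAt ℝ (deriv v) r) ∧
    (∀ r ∈ Ioo (0:ℝ) R, deriv (deriv v) r + ((n : ℝ) - 1) / r * deriv v r + f (v r) = 0) ∧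
    deriv v 0 = 0 ∧ v R = 0

end
end Paper

open Paper Set Filter MeasureTheory

/-- An odd function differentiable on `(0,∞)` is differentiable away from `0`. -/
theorem differentiableAt_of_odd {f : ℝ → ℝ} (hodd : ∀ s, f (-s) = -f s)
    (hpos : ∀ s : ℝ, 0 < s → DifferentiableAt ℝ f s) {s : ℝ} (hs : s ≠ 0) :
    DifferentiableAt ℝ f s := by
  rcases lt_or_gt_of_ne hs with h | h
  · have hneg : DifferentiableAt ℝ (fun t => -f (-t)) s :=
      ((hpos (-s) (by linarith)).comp s differentiableAt_id.neg).neg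
    have hfun : (fun t => -f (-t)) = f := by
      funext t
      rw [hodd, neg_neg]
    rwa [hfun] at hneg
  · exact hpos s h

/-- A continuous function without zeros on an open interval has constant sign there. -/
theorem exists_mul_pos_of_ne_zero {g : ℝ → ℝ} {a b : ℝ}
    (hg : ContinuousOn g (Ioo a b)) (h0 : ∀ x ∈ Ioo a b, g x ≠ 0) :
    ∃ c : ℝ, ∀ x ∈ Ioo a b, 0 < c * g x := by
  by_cases hpos : ∀ x ∈ Ioo a b, 0 < g x
  · exact ⟨1, fun x hx => by simpa using hpos x hx⟩
  · push Not at hpos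
    obtain ⟨y, hy, hgy⟩ := hpos
    refine ⟨-1, fun x hx => ?_⟩
    by_contra hx'
    obtain ⟨z, hz, hgz⟩ := isPreconnected_Ioo.intermediate_value hy hx hg
      (show (0 : ℝ) ∈ Icc (g y) (g x) from ⟨hgy, by linarith⟩)
    exact h0 z hz hgz

/-- If `u'` does not vanish on an open interval, `u` has at most one zero there. -/
theorem exists_forall_ne_zero_of_deriv_ne_zero {u : ℝ → ℝ} {a b : ℝ} (hab : a < b)
    (hu : ContinuousOn u (Ioo a b)) (h0 : ∀ x ∈ Ioo a b, deriv u x ≠ 0) :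
    ∃ z ∈ Ioo a b, ∀ x ∈ Ioo a b, x ≠ z → u x ≠ 0 := by
  by_cases hz : ∃ z ∈ Ioo a b, u z = 0
  · obtain ⟨z, hz, huz⟩ := hz
    refine ⟨z, hz, fun x hx hxz hux => ?_⟩
    have rolle : ∀ p ∈ Ioo a b, ∀ q ∈ Ioo a b, p < q → u p = u q → False := by
      intro p hp q hq hpq hupq
      obtain ⟨t, ht, hdt⟩ := exists_deriv_eq_zero hpq
        (hu.mono fun y hy => ⟨hp.1.trans_le hy.1, hy.2.trans_lt hq.2⟩) hupq
      exact h0 t ⟨hp.1.trans ht.1, ht.2.trans hq.2⟩ hdt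
    rcases lt_or_gt_of_ne hxz with h | h
    · exact rolle x hx z hz h (hux.trans huz.symm)
    · exact rolle z hz x hx h (huz.trans hux.symm)
  · push Not at hz
    obtain ⟨z, hz'⟩ := exists_between hab
    exact ⟨z, hz', fun x hx _ => hz x hx⟩

/-- A continuous function with negative derivative off one interior point decreases strictly. -/
theorem lt_of_deriv_neg_of_ne {w : ℝ → ℝ} {a b z : ℝ} (hz : z ∈ Ioo a b)
    (hw : ContinuousOn w (Icc a b)) (hd : ∀ x ∈ Ioo a b, x ≠ z → deriv w x < 0) :
    w b < w a := by
  have hl : StrictAntiOn w (Icc a z) := by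
    refine strictAntiOn_of_deriv_neg (convex_Icc a z)
      (hw.mono (Icc_subset_Icc_right hz.2.le)) fun x hx => ?_
    rw [interior_Icc] at hx
    exact hd x ⟨hx.1, hx.2.trans hz.2⟩ hx.2.ne
  have hr : StrictAntiOn w (Icc z b) := by
    refine strictAntiOn_of_deriv_neg (convex_Icc z b)
      (hw.mono (Icc_subset_Icc_left hz.1.le)) fun x hx => ?_
    rw [interior_Icc] at hx
    exact hd x ⟨hz.1.trans hx.1, hx.2⟩ hx.1.ne'
  exact (hr (left_mem_Icc.2 hz.2.le) (right_mem_Icc.2 hz.2.le) hz.2).trans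
    (hl (left_mem_Icc.2 hz.1.le) (right_mem_Icc.2 hz.1.le) hz.1)

/-- If `φ v > 0` to the right of a zero `a` of `v`, then `φ(a) v'(a) ≥ 0`. -/
theorem mul_deriv_nonneg_of_pos_right {φ v : ℝ → ℝ} {a b v' : ℝ} (hab : a < b)
    (hφ : ContinuousAt φ a) (hv : HasDerivAt v v' a) (h0 : v a = 0)
    (hpos : ∀ x ∈ Ioo a b, 0 < φ x * v x) : 0 ≤ φ a * v' := by
  have hlim : Tendsto (fun x => φ x * slope v a x) (nhdsWithin a (Ioi a)) (nhds (φ a * v')) :=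
    (hφ.tendsto.mono_left nhdsWithin_le_nhds).mul
      (hv.tendsto_slope.mono_left (nhdsWithin_mono a fun x hx => ne_of_gt hx))
  refine ge_of_tendsto hlim ?_
  filter_upwards [Ioo_mem_nhdsGT hab] with x hx
  rw [slope_def_field, h0, sub_zero, mul_div_assoc']
  exact (div_pos (hpos x hx) (sub_pos.2 hx.1)).le

/-- If `φ v > 0` to the left of a zero `b` of `v`, then `φ(b) v'(b) ≤ 0`. -/
theorem mul_deriv_nonpos_of_pos_left {φ v : ℝ → ℝ} {a b v' : ℝ} (hab : a < b)
    (hφ : ContinuousAt φ b) (hv : HasDerivAt v v' b) (h0 : v b = 0)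
    (hpos : ∀ x ∈ Ioo a b, 0 < φ x * v x) : φ b * v' ≤ 0 := by
  have hlim : Tendsto (fun x => φ x * slope v b x) (nhdsWithin b (Iio b)) (nhds (φ b * v')) :=
    (hφ.tendsto.mono_left nhdsWithin_le_nhds).mul
      (hv.tendsto_slope.mono_left (nhdsWithin_mono b fun x hx => ne_of_lt hx))
  refine le_of_tendsto hlim ?_
  filter_upwards [Ioo_mem_nhdsLT hab] with x hx
  rw [slope_def_field, h0, sub_zero, mul_div_assoc']
  exact (div_neg_of_pos_of_neg (hpos x hx) (sub_neg.2 hx.2)).le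

/-- Derivative of `u''` for a solution `u` of the radial equation, where `f` is differentiable. -/
theorem hasDerivAt_deriv_deriv_of_radial {a : ℝ} {f u : ℝ → ℝ}
    (hud : ∀ r : ℝ, 0 < r → DifferentiableAt ℝ u r ∧ DifferentiableAt ℝ (deriv u) r)
    (hueq : ∀ r : ℝ, 0 < r → deriv (deriv u) r + a / r * deriv u r + f (u r) = 0)
    {r : ℝ} (hr : 0 < r) (hf : DifferentiableAt ℝ f (u r)) :
    HasDerivAt (deriv (deriv u))
      (a / r ^ 2 * deriv u r - a / r * deriv (deriv u) r - deriv f (u r) * deriv u r) r := by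
  have hdiv : HasDerivAt (fun x : ℝ => a / x) (-a / r ^ 2) r := by
    simpa using (hasDerivAt_const r a).fun_div (hasDerivAt_id r) hr.ne'
  have hrhs := ((hdiv.mul (hud r hr).2.hasDerivAt).add
    (hf.hasDerivAt.comp r (hud r hr).1.hasDerivAt)).neg
  refine (hrhs.congr_of_eventuallyEq ?_).congr_deriv (by ring)
  filter_upwards [lt_mem_nhds hr] with x hx
  have := hueq x hx
  simp only [Pi.neg_apply, Pi.add_apply, Pi.mul_apply, Function.comp_apply]
  linarith

/-- **Proposition 3.1 (i).** Between two consecutive zeros of `u'` there is at least one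
zero of `φ`, where `φ` solves the linearized equation. -/
theorem phi_zero_between_extremals
    (n : ℕ) (hn : 2 ≤ n)
    (f : ℝ → ℝ) (b β : ℝ) (hf : Continuous f)
    (h1 : Hf1 f b β) (h2 : Hf2 f)
    (u : ℝ → ℝ)
    (hud : ∀ r : ℝ, 0 < r → DifferentiableAt ℝ u r ∧ DifferentiableAt ℝ (deriv u) r)
    (hueq : ∀ r : ℝ, 0 < r →
      deriv (deriv u) r + ((n : ℝ) - 1) / r * deriv u r + f (u r) = 0)
    (φ : ℝ → ℝ)
    (hφd : ∀ r : ℝ, 0 < r → DifferentiableAt ℝ φ r)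
    (hφc : ContinuousOn (deriv φ) (Ioi 0))
    (hφd2 : ∀ r : ℝ, 0 < r → u r ≠ 0 → DifferentiableAt ℝ (deriv φ) r)
    (hφne : ∃ r : ℝ, 0 < r ∧ φ r ≠ 0)
    (hφeq : ∀ r : ℝ, 0 < r → u r ≠ 0 →
      deriv (deriv φ) r + ((n : ℝ) - 1) / r * deriv φ r + deriv f (u r) * φ r = 0)
    (r₁ r₂ : ℝ) (hr₁ : 0 < r₁) (hr₁₂ : r₁ < r₂)
    (hz₁ : deriv u r₁ = 0) (hz₂ : deriv u r₂ = 0)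
    (hcons : ∀ r ∈ Ioo r₁ r₂, deriv u r ≠ 0) :
    ∃ t ∈ Ioo r₁ r₂, φ t = 0 := by
  by_contra hno
  push Not at hno
  obtain ⟨k, rfl⟩ : ∃ k, n = k + 2 := ⟨n - 2, by omega⟩
  have hk : (((k + 2 : ℕ) : ℝ) - 1) = (k : ℝ) + 1 := by push_cast; ring
  rw [hk] at hueq hφeq
  have hpos : ∀ r ∈ Icc r₁ r₂, 0 < r := fun r hr => hr₁.trans_le hr.1
  have hcu : ContinuousOn u (Ioi 0) := fun r hr => (hud r hr).1.continuousAt.continuousWithinAt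
  have hcv : ContinuousOn (deriv u) (Ioi 0) :=
    fun r hr => (hud r hr).2.continuousAt.continuousWithinAt
  have hcφ : ContinuousOn φ (Ioi 0) := fun r hr => (hφd r hr).continuousAt.continuousWithinAt
  have hcv' : ContinuousOn (deriv (deriv u)) (Ioi 0) := by
    have hrhs : ContinuousOn (fun r : ℝ => -(((k : ℝ) + 1) / r * deriv u r + f (u r))) (Ioi 0) :=
      (((continuousOn_const.div continuousOn_id fun r hr => ne_of_gt hr).mul hcv).add
        (hf.comp_continuousOn hcu)).neg
    refine hrhs.congr fun r hr => ?_
    have := hueq r hr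
    dsimp only
    linarith
  have hsub : Icc r₁ r₂ ⊆ Ioi 0 := hpos
  have hsub' : Ioo r₁ r₂ ⊆ Ioi 0 := Ioo_subset_Icc_self.trans hsub
  obtain ⟨c, hc⟩ := exists_mul_pos_of_ne_zero (g := fun r => φ r * deriv u r)
    ((hcφ.mul hcv).mono hsub') fun r hr => mul_ne_zero (hno r hr) (hcons r hr)
  obtain ⟨z, hz, hzu⟩ :=
    exists_forall_ne_zero_of_deriv_ne_zero hr₁₂ (hcu.mono hsub') hcons
  have hc' : ∀ r ∈ Ioo r₁ r₂, 0 < (c * φ r) * deriv u r := fun r hr => by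
    rw [mul_assoc]
    exact hc r hr
  have hr₂ : 0 < r₂ := hr₁.trans hr₁₂
  have hleft := mul_deriv_nonneg_of_pos_right hr₁₂
    ((hφd r₁ hr₁).continuousAt.const_mul c) (hud r₁ hr₁).2.hasDerivAt hz₁ hc'
  have hright := mul_deriv_nonpos_of_pos_left hr₁₂
    ((hφd r₂ hr₂).continuousAt.const_mul c) (hud r₂ hr₂).2.hasDerivAt hz₂ hc'
  let W : ℝ → ℝ := fun r =>
    c * (r ^ (k + 1) * (deriv φ r * deriv u r - φ r * deriv (deriv u) r))
  have hWc : ContinuousOn W (Icc r₁ r₂) :=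
    (continuousOn_const.mul ((continuousOn_id.pow (k + 1)).mul
      ((hφc.mul hcv).sub (hcφ.mul hcv')))).mono hsub
  have hWd : ∀ r ∈ Ioo r₁ r₂, r ≠ z → deriv W r < 0 := by
    intro r hr hrz
    have hr0 : 0 < r := hsub' hr
    have hur := hzu r hr hrz
    have hv'' := hasDerivAt_deriv_deriv_of_radial hud hueq hr0
      (differentiableAt_of_odd h1.1 h2.2.1 hur)
    have hW := ((hasDerivAt_pow (k + 1) r).mul
      (((hφd2 r hr0 hur).hasDerivAt.mul (hud r hr0).2.hasDerivAt).sub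
        ((hφd r hr0).hasDerivAt.mul hv''))).const_mul c
    have hφ'' : deriv (deriv φ) r =
        -(((k : ℝ) + 1) / r * deriv φ r) - deriv f (u r) * φ r := by
      linarith [hφeq r hr0 hur]
    have hval : HasDerivAt W
        (-(((k : ℝ) + 1) * r ^ (k + 1) / r ^ 2 * (c * φ r * deriv u r))) r := by
      refine hW.congr_deriv ?_
      simp only [Pi.mul_apply, Pi.sub_apply, hφ'', Nat.cast_add, Nat.cast_one,
        Nat.add_sub_cancel]
      field_simp
      ring
    rw [hval.deriv]
    have := hc' r hr
    exact neg_neg_of_pos (by positivity)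
  have hlt := lt_of_deriv_neg_of_ne hz hWc hWd
  have hW₁ : W r₁ = -(r₁ ^ (k + 1) * (c * φ r₁ * deriv (deriv u) r₁)) := by
    simp only [W, hz₁]
    ring
  have hW₂ : W r₂ = -(r₂ ^ (k + 1) * (c * φ r₂ * deriv (deriv u) r₂)) := by
    simp only [W, hz₂]
    ring
  rw [hW₁, hW₂] at hlt
  have h₁ := mul_nonneg (pow_pos hr₁ (k + 1)).le hleft
  have h₂ := mul_nonpos_of_nonneg_of_nonpos (pow_pos hr₂ (k + 1)).le hright
  linarith
end

section
/- Assume f satisfies (f1) and (f2), and let α ∈ G_k for some k ≥ 1, with u = u(·,α). Let φ be a C¹ function on [0,∞) with φ(0) = 1, φ'(0) = 0, satisfying the linearized equation φ''(r) + ((n−1)/r)φ'(r) + f'(u(r))φ(r) = 0 at every r > 0 with u(r) ≠ 0. Then φ has at least one zero in (T_{k−1}(α), Z_k(α)) (where T₀(α) := 0; this includes the case Z_k(α) = ∞). -/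
open Set Filter MeasureTheory

open Paper Set Filter MeasureTheory

namespace Paper

/-- `v` solves the radial equation in dimension `j + 2`, and `φ` solves its linearization
around `v` wherever `v` does not vanish. -/
structure LinearizedPair (j : ℕ) (f v φ : ℝ → ℝ) : Prop where
  diff : ∀ r : ℝ, 0 < r → DifferentiableAt ℝ v r
  diff_deriv : ∀ r : ℝ, 0 < r → DifferentiableAt ℝ (deriv v) r
  eqn : ∀ r : ℝ, 0 < r → deriv (deriv v) r + ((j : ℝ) + 1) / r * deriv v r + f (v r) = 0
  lin_diff : ∀ r : ℝ, 0 < r → DifferentiableAt ℝ φ r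
  lin_diff_deriv : ∀ r : ℝ, 0 < r → DifferentiableAt ℝ (deriv φ) r
  lin_eqn : ∀ r : ℝ, 0 < r → v r ≠ 0 →
    deriv (deriv φ) r + ((j : ℝ) + 1) / r * deriv φ r + deriv f (v r) * φ r = 0

/-- The weighted Wronskian `r^(j+1) (v' φ' - v'' φ)` with `v''` eliminated by the equation. -/
noncomputable def wronskian (j : ℕ) (f v φ : ℝ → ℝ) (r : ℝ) : ℝ :=
  r ^ (j + 1) * (deriv v r * deriv φ r + f (v r) * φ r) + ((j : ℝ) + 1) * r ^ j * (deriv v r * φ r)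

theorem deriv_neg_of_odd {f : ℝ → ℝ} (hodd : ∀ s, f (-s) = -f s) (s : ℝ) :
    deriv f (-s) = deriv f s := by
  have h := deriv_comp_neg f s
  have h' : (fun x => f (-x)) = fun x => -f x := funext hodd
  rw [h', deriv.fun_neg] at h
  linarith

/-- An odd function that is `C¹` on `(0,∞)` is `C¹` away from `0`. -/
theorem differentiableAt_and_continuousAt_deriv_of_odd {f : ℝ → ℝ} (hodd : ∀ s, f (-s) = -f s)
    (hd : ∀ s : ℝ, 0 < s → DifferentiableAt ℝ f s) (hc : ContinuousOn (deriv f) (Ioi 0))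
    {s : ℝ} (hs : s ≠ 0) : DifferentiableAt ℝ f s ∧ ContinuousAt (deriv f) s := by
  rcases hs.lt_or_gt with h | h
  · have hf : f = fun x => -f (-x) := by
      funext x
      rw [hodd, neg_neg]
    have hf' : deriv f = fun x => deriv f (-x) := by
      funext x
      rw [deriv_neg_of_odd hodd]
    have hpos : 0 < -s := by linarith
    constructor
    · rw [hf]
      exact ((hd _ hpos).comp s differentiableAt_id.neg).neg
    · rw [hf']
      exact ContinuousAt.comp (f := fun x : ℝ => -x) (hc.continuousAt (Ioi_mem_nhds hpos))
        continuous_neg.continuousAt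
  · exact ⟨hd s h, hc.continuousAt (Ioi_mem_nhds h)⟩

namespace LinearizedPair

variable {j : ℕ} {f v φ : ℝ → ℝ}

theorem hasDerivAt_wronskian (h : LinearizedPair j f v φ) {r : ℝ} (hr : 0 < r) (hv : v r ≠ 0)
    (hf : DifferentiableAt ℝ f (v r)) :
    HasDerivAt (wronskian j f v φ) (-(((j : ℝ) + 1) * r ^ j * deriv v r * φ r / r)) r := by
  have hv1 := (h.diff r hr).hasDerivAt
  have hv2 := (h.diff_deriv r hr).hasDerivAt
  have hp1 := (h.lin_diff r hr).hasDerivAt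
  have hp2 := (h.lin_diff_deriv r hr).hasDerivAt
  have hfv := hf.hasDerivAt.comp r hv1
  have hW := (((hasDerivAt_pow (j + 1) r).mul ((hv2.mul hp2).add (hfv.mul hp1)))).add
    (((hasDerivAt_pow j r).const_mul ((j : ℝ) + 1)).mul (hv2.mul hp1))
  have e1 : deriv (deriv v) r = -(((j : ℝ) + 1) / r * deriv v r) - f (v r) := by
    linarith [h.eqn r hr]
  have e2 : deriv (deriv φ) r = -(((j : ℝ) + 1) / r * deriv φ r) - deriv f (v r) * φ r := by
    linarith [h.lin_eqn r hr hv]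
  refine (hW.congr_deriv ?_).congr_of_eventuallyEq (Eventually.of_forall fun x => ?_)
  · simp only [Function.comp_apply, Nat.add_sub_cancel, Pi.mul_apply, Pi.add_apply]
    rw [e1, e2]
    rcases j with _ | i
    · simp
      field_simp
      ring
    · simp only [Nat.add_sub_cancel, pow_succ]
      push_cast
      field_simp
      ring
  · simp [wronskian]

theorem continuousAt_wronskian (h : LinearizedPair j f v φ) (hf : Continuous f) {r : ℝ}
    (hr : 0 < r) : ContinuousAt (wronskian j f v φ) r := by
  have hv1 := (h.diff r hr).continuousAt
  have hv2 := (h.diff_deriv r hr).continuousAt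
  have hp1 := (h.lin_diff r hr).continuousAt
  have hp2 := (h.lin_diff_deriv r hr).continuousAt
  have hfv : ContinuousAt (fun x => f (v x)) r := hf.continuousAt.comp hv1
  unfold wronskian
  fun_prop

/-- Near `0` the flux `r^(j+1) φ'` stays bounded. -/
theorem eventually_abs_flux_le (h : LinearizedPair j f v φ) (hv : ContinuousOn v (Ici 0))
    (hv0 : v 0 ≠ 0) (hf' : ContinuousAt (deriv f) (v 0)) (hφ : ContinuousOn φ (Ici 0)) :
    ∃ C : ℝ, ∀ᶠ r in nhdsWithin (0 : ℝ) (Ioi 0), |r ^ (j + 1) * deriv φ r| ≤ C := by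
  have tv : Tendsto v (nhdsWithin 0 (Ioi 0)) (nhds (v 0)) :=
    (hv 0 self_mem_Ici).mono_left (nhdsWithin_mono _ Ioi_subset_Ici_self)
  have tφ : Tendsto φ (nhdsWithin 0 (Ioi 0)) (nhds (φ 0)) :=
    (hφ 0 self_mem_Ici).mono_left (nhdsWithin_mono _ Ioi_subset_Ici_self)
  have tr : Tendsto (fun r : ℝ => r) (nhdsWithin 0 (Ioi 0)) (nhds 0) :=
    tendsto_id.mono_left nhdsWithin_le_nhds
  have tg := ((tr.pow (j + 1)).mul ((hf'.tendsto.comp tv).mul tφ)).abs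
  set K := |(0 : ℝ) ^ (j + 1) * (deriv f (v 0) * φ 0)| + 1
  have ev : ∀ᶠ r in nhdsWithin (0 : ℝ) (Ioi 0),
      v r ≠ 0 ∧ |r ^ (j + 1) * (deriv f (v r) * φ r)| < K :=
    (tv.eventually_ne hv0).and (tg.eventually_lt_const (by linarith))
  obtain ⟨ε, hε, hsub⟩ := mem_nhdsGT_iff_exists_Ioc_subset.1 ev
  have hε : 0 < ε := hε
  have hd : ∀ x ∈ Ioc (0 : ℝ) ε, HasDerivWithinAt (fun r => r ^ (j + 1) * deriv φ r)
      (-(x ^ (j + 1) * (deriv f (v x) * φ x))) (Ioc 0 ε) x := by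
    intro x hx
    have hx0 : x ≠ 0 := hx.1.ne'
    have e2 : deriv (deriv φ) x = -(((j : ℝ) + 1) / x * deriv φ x) - deriv f (v x) * φ x := by
      linarith [h.lin_eqn x hx.1 (hsub hx).1]
    refine (((hasDerivAt_pow (j + 1) x).mul
      (h.lin_diff_deriv x hx.1).hasDerivAt).congr_deriv ?_).hasDerivWithinAt
    rw [e2]
    simp only [Nat.add_sub_cancel, pow_succ]
    push_cast
    field_simp
    ring
  refine ⟨|ε ^ (j + 1) * deriv φ ε| + K * ε, ?_⟩
  filter_upwards [Ioc_mem_nhdsGT hε] with r hr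
  have hb := (convex_Ioc (0 : ℝ) ε).norm_image_sub_le_of_norm_hasDerivWithin_le (C := K) hd
    (fun x hx => by
      rw [Real.norm_eq_abs, abs_neg]
      exact (hsub hx).2.le) ⟨hε, le_rfl⟩ hr
  have hK0 : 0 ≤ K := by positivity
  have hb2 : ‖r - ε‖ ≤ ε := by
    rw [Real.norm_eq_abs, abs_le]
    constructor <;> linarith [hr.1, hr.2]
  rw [Real.norm_eq_abs] at hb
  have h3 := abs_sub_abs_le_abs_sub (r ^ (j + 1) * deriv φ r) (ε ^ (j + 1) * deriv φ ε)
  have h4 := mul_le_mul_of_nonneg_left hb2 hK0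
  linarith

theorem tendsto_wronskian_zero (h : LinearizedPair j f v φ) (hf : Continuous f)
    (hv : ContinuousOn v (Ici 0)) (hv0 : v 0 ≠ 0) (hf' : ContinuousAt (deriv f) (v 0))
    (hφ : ContinuousOn φ (Ici 0)) (hdv : Tendsto (deriv v) (nhdsWithin 0 (Ioi 0)) (nhds 0)) :
    Tendsto (wronskian j f v φ) (nhdsWithin 0 (Ioi 0)) (nhds 0) := by
  obtain ⟨C, hC⟩ := h.eventually_abs_flux_le hv hv0 hf' hφ
  have tv : Tendsto v (nhdsWithin 0 (Ioi 0)) (nhds (v 0)) :=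
    (hv 0 self_mem_Ici).mono_left (nhdsWithin_mono _ Ioi_subset_Ici_self)
  have tφ : Tendsto φ (nhdsWithin 0 (Ioi 0)) (nhds (φ 0)) :=
    (hφ 0 self_mem_Ici).mono_left (nhdsWithin_mono _ Ioi_subset_Ici_self)
  have tr : Tendsto (fun r : ℝ => r) (nhdsWithin 0 (Ioi 0)) (nhds 0) :=
    tendsto_id.mono_left nhdsWithin_le_nhds
  have t1 : Tendsto (fun r => r ^ (j + 1) * deriv φ r * deriv v r)
      (nhdsWithin 0 (Ioi 0)) (nhds 0) :=
    bdd_le_mul_tendsto_zero' C hC hdv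
  have t2 := (tr.pow (j + 1)).mul (((hf.tendsto _).comp tv).mul tφ)
  have t3 := ((tr.pow j).const_mul ((j : ℝ) + 1)).mul (hdv.mul tφ)
  have := (t1.add t2).add t3
  simp only [zero_mul, mul_zero, add_zero, ne_eq, Nat.add_eq_zero_iff, one_ne_zero, and_false,
    not_false_eq_true, zero_pow] at this
  refine this.congr fun r => ?_
  simp only [wronskian, Function.comp_apply]
  ring

/-- The Wronskian has a nonnegative right limit at a critical point from which `v` decreases. -/
theorem tendsto_wronskian_critical (h : LinearizedPair j f v φ) (hf : Continuous f) {T Z : ℝ}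
    (hT : 0 < T) (hTZ : T < Z) (hcrit : deriv v T = 0) (hdec : ∀ s ∈ Ioo T Z, deriv v s < 0)
    (hφ : ∀ s ∈ Ioo T Z, 0 < φ s) :
    ∃ L, 0 ≤ L ∧ Tendsto (wronskian j f v φ) (nhdsWithin T (Ioi T)) (nhds L) := by
  refine ⟨wronskian j f v φ T, ?_, (h.continuousAt_wronskian hf hT).mono_left nhdsWithin_le_nhds⟩
  have hφT : 0 ≤ φ T := by
    refine ge_of_tendsto ((h.lin_diff T hT).continuousAt.mono_left
      (nhdsWithin_le_nhds (s := Ioi T))) ?_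
    filter_upwards [Ioo_mem_nhdsGT hTZ] with s hs using (hφ s hs).le
  have hv2 : deriv (deriv v) T ≤ 0 := by
    refine le_of_tendsto ((hasDerivAt_iff_tendsto_slope.1
      (h.diff_deriv T hT).hasDerivAt).mono_left (nhdsWithin_mono T (t := {T}ᶜ) (s := Ioi T)
        fun s hs => (ne_of_gt hs))) ?_
    filter_upwards [Ioo_mem_nhdsGT hTZ] with s hs
    rw [slope_def_field, hcrit, sub_zero]
    exact div_nonpos_of_nonpos_of_nonneg (hdec s hs).le (by linarith [hs.1])
  have hfv : 0 ≤ f (v T) := by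
    have := h.eqn T hT
    rw [hcrit] at this
    linarith
  simp only [wronskian, hcrit, zero_mul, mul_zero, zero_add, add_zero]
  positivity

theorem strictMonoOn_wronskian (h : LinearizedPair j f v φ)
    (hfd : ∀ s, s ≠ 0 → DifferentiableAt ℝ f s) {T Z : ℝ} (hT : 0 ≤ T)
    (hpos : ∀ s ∈ Ioo T Z, 0 < v s) (hdec : ∀ s ∈ Ioo T Z, deriv v s < 0)
    (hφ : ∀ s ∈ Ioo T Z, 0 < φ s) :
    StrictMonoOn (wronskian j f v φ) (Ioo T Z) := by
  have hd : ∀ s ∈ Ioo T Z, HasDerivAt (wronskian j f v φ)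
      (-(((j : ℝ) + 1) * s ^ j * deriv v s * φ s / s)) s := fun s hs =>
    h.hasDerivAt_wronskian (hT.trans_lt hs.1) (hpos s hs).ne' (hfd _ (hpos s hs).ne')
  refine strictMonoOn_of_deriv_pos (convex_Ioo T Z)
    (fun s hs => (hd s hs).continuousAt.continuousWithinAt) fun s hs => ?_
  rw [interior_Ioo] at hs
  rw [(hd s hs).deriv]
  have h0 : 0 < s := hT.trans_lt hs.1
  have h1 := hφ s hs
  have h2 : 0 < -deriv v s := neg_pos.2 (hdec s hs)
  have : -(((j : ℝ) + 1) * s ^ j * deriv v s * φ s / s)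
      = ((j : ℝ) + 1) * s ^ j * -deriv v s * φ s / s := by ring
  rw [this]
  positivity

theorem wronskian_pos (h : LinearizedPair j f v φ)
    (hfd : ∀ s, s ≠ 0 → DifferentiableAt ℝ f s) {T Z : ℝ} (hT : 0 ≤ T)
    (hpos : ∀ s ∈ Ioo T Z, 0 < v s) (hdec : ∀ s ∈ Ioo T Z, deriv v s < 0)
    (hφ : ∀ s ∈ Ioo T Z, 0 < φ s) {L : ℝ} (hL : 0 ≤ L)
    (hlim : Tendsto (wronskian j f v φ) (nhdsWithin T (Ioi T)) (nhds L)) :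
    ∀ r ∈ Ioo T Z, 0 < wronskian j f v φ r := by
  intro r hr
  have hmono := h.strictMonoOn_wronskian hfd hT hpos hdec hφ
  obtain ⟨q, hq1, hq2⟩ := exists_between hr.1
  have hq : q ∈ Ioo T Z := ⟨hq1, hq2.trans hr.2⟩
  have : L ≤ wronskian j f v φ q := by
    refine le_of_tendsto hlim ?_
    filter_upwards [Ioo_mem_nhdsGT hq1] with s hs
    exact (hmono ⟨hs.1, hs.2.trans hq.2⟩ hq hs.2).le
  linarith [hmono hq hr hq2]

/-- `φ` cannot stay positive up to a finite double zero of `v`. -/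
theorem false_of_double_zero (h : LinearizedPair j f v φ) (hf : Continuous f) (hf0 : f 0 = 0)
    (hfd : ∀ s, s ≠ 0 → DifferentiableAt ℝ f s) {T Z : ℝ} (hT : 0 ≤ T) (hTZ : T < Z)
    (hpos : ∀ s ∈ Ioo T Z, 0 < v s) (hdec : ∀ s ∈ Ioo T Z, deriv v s < 0)
    (hφ : ∀ s ∈ Ioo T Z, 0 < φ s) {L : ℝ} (hL : 0 ≤ L)
    (hlim : Tendsto (wronskian j f v φ) (nhdsWithin T (Ioi T)) (nhds L))
    (hvZ : v Z = 0) (hdvZ : deriv v Z = 0) : False := by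
  have hmono := h.strictMonoOn_wronskian hfd hT hpos hdec hφ
  obtain ⟨q, hq1, hq2⟩ := exists_between hTZ
  have hq := h.wronskian_pos hfd hT hpos hdec hφ hL hlim q ⟨hq1, hq2⟩
  have hle : wronskian j f v φ q ≤ wronskian j f v φ Z := by
    refine ge_of_tendsto ((h.continuousAt_wronskian hf (hT.trans_lt hTZ)).mono_left
      (nhdsWithin_le_nhds (s := Iio Z))) ?_
    filter_upwards [Ioo_mem_nhdsLT hq2] with s hs
    exact (hmono ⟨hq1, hq2⟩ ⟨hq1.trans hs.1, hs.2⟩ hs.1).le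
  have hZ : wronskian j f v φ Z = 0 := by simp [wronskian, hvZ, hdvZ, hf0]
  linarith

/-- `φ` cannot stay positive along a positive solution decreasing to `0` at infinity. -/
theorem false_of_tendsto_zero (h : LinearizedPair j f v φ)
    (hfd : ∀ s, s ≠ 0 → DifferentiableAt ℝ f s) {b : ℝ} (hb : 0 < b)
    (hfb : ∀ s ∈ Icc 0 b, f s ≤ 0) {T : ℝ} (hT : 0 ≤ T)
    (hpos : ∀ s, T < s → 0 < v s) (hdec : ∀ s, T < s → deriv v s < 0)
    (hφ : ∀ s, T < s → 0 < φ s) {L : ℝ} (hL : 0 ≤ L)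
    (hlim : Tendsto (wronskian j f v φ) (nhdsWithin T (Ioi T)) (nhds L))
    (hv : Tendsto v atTop (nhds 0)) : False := by
  obtain ⟨R, hR⟩ := eventually_atTop.1 ((hv.eventually_lt_const hb).and (eventually_gt_atTop T))
  have hTR : T < R := (hR R le_rfl).2
  have hR0 : 0 < R := hT.trans_lt hTR
  have hfv : ∀ r, R ≤ r → f (v r) ≤ 0 := fun r hr =>
    hfb _ ⟨(hpos r (hTR.trans_le hr)).le, (hR r hr).1.le⟩
  have hW : ∀ r, R ≤ r → wronskian j f v φ R ≤ wronskian j f v φ r := by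
    intro r hr
    have hmono := h.strictMonoOn_wronskian hfd (Z := r + 1) hT (fun s hs => hpos s hs.1)
      (fun s hs => hdec s hs.1) (fun s hs => hφ s hs.1)
    exact hmono.monotoneOn ⟨hTR, by linarith⟩ ⟨hTR.trans_le hr, by linarith⟩ hr
  have hc : 0 < wronskian j f v φ R :=
    h.wronskian_pos hfd (Z := R + 1) hT (fun s hs => hpos s hs.1) (fun s hs => hdec s hs.1)
      (fun s hs => hφ s hs.1) hL hlim R ⟨hTR, by linarith⟩
  set c := wronskian j f v φ R
  have hp : ∀ r, R ≤ r →
      HasDerivAt (fun x => x ^ (j + 1) * deriv v x) (-(r ^ (j + 1) * f (v r))) r := by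
    intro r hr
    have hr0 : 0 < r := hR0.trans_le hr
    have e1 : deriv (deriv v) r = -(((j : ℝ) + 1) / r * deriv v r) - f (v r) := by
      linarith [h.eqn r hr0]
    refine ((hasDerivAt_pow (j + 1) r).mul (h.diff_deriv r hr0).hasDerivAt).congr_deriv ?_
    rw [e1]
    simp only [Nat.add_sub_cancel, pow_succ]
    push_cast
    field_simp
    ring
  have hpm : MonotoneOn (fun x => x ^ (j + 1) * deriv v x) (Ici R) := by
    refine monotoneOn_of_deriv_nonneg (convex_Ici R)
      (fun r hr => (hp r hr).continuousAt.continuousWithinAt)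
      (fun r hr => (hp r (interior_subset hr)).differentiableAt.differentiableWithinAt)
      fun r hr => ?_
    have hr' : R ≤ r := interior_subset hr
    rw [(hp r hr').deriv]
    have := hfv r hr'
    have : 0 < r ^ (j + 1) := pow_pos (hR0.trans_le hr') _
    nlinarith
  set M := -(R ^ (j + 1) * deriv v R)
  have hM0 : 0 < M := by
    have := mul_neg_of_pos_of_neg (pow_pos hR0 (j + 1)) (hdec R hTR)
    linarith
  have hφ' : ∀ r, R ≤ r → deriv φ r ≤ -(c / M) := by
    intro r hr
    have hr0 : 0 < r := hR0.trans_le hr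
    have hpr : 0 < r ^ (j + 1) := pow_pos hr0 _
    have hpj : 0 < r ^ j := pow_pos hr0 _
    have hdr := hdec r (hTR.trans_le hr)
    have hφr := hφ r (hTR.trans_le hr)
    have h1 : r ^ (j + 1) * (f (v r) * φ r) ≤ 0 :=
      mul_nonpos_of_nonneg_of_nonpos hpr.le (mul_nonpos_of_nonpos_of_nonneg (hfv r hr) hφr.le)
    have h2 : ((j : ℝ) + 1) * r ^ j * (deriv v r * φ r) ≤ 0 :=
      mul_nonpos_of_nonneg_of_nonpos (by positivity)
        (mul_nonpos_of_nonpos_of_nonneg hdr.le hφr.le)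
    have h3 : c ≤ r ^ (j + 1) * deriv v r * deriv φ r := by
      have := hW r hr
      simp only [wronskian] at this
      linarith
    have h4 : R ^ (j + 1) * deriv v R ≤ r ^ (j + 1) * deriv v r := hpm self_mem_Ici hr hr
    have h5 : r ^ (j + 1) * deriv v r < 0 := mul_neg_of_pos_of_neg hpr hdr
    have h6 : deriv φ r < 0 := by
      by_contra hcon
      nlinarith
    rw [le_neg, div_le_iff₀ hM0]
    nlinarith
  have hlin := (convex_Ici R).image_sub_le_mul_sub_of_deriv_le (f := φ) (C := -(c / M))
    (fun r hr => (h.lin_diff r (hR0.trans_le hr)).continuousAt.continuousWithinAt)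
    (fun r hr => (h.lin_diff r (hR0.trans_le (interior_subset hr))).differentiableWithinAt)
    (fun r hr => hφ' r (interior_subset hr)) R self_mem_Ici
  have hφR := hφ R hTR
  have hstep : 0 < φ R * M / c := by positivity
  have hfin := hlin (R + φ R * M / c) (by simp only [mem_Ici]; linarith) (by linarith)
  have hlast := hφ (R + φ R * M / c) (by linarith)
  have hcalc : -(c / M) * (R + φ R * M / c - R) = -φ R := by
    field_simp
    ring
  rw [hcalc] at hfin
  linarith

end LinearizedPair

/-- Replacing a solution and a linearized solution by multiples with factors `±1` and any `τ`. -/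
theorem LinearizedPair.smul {j : ℕ} {f v φ : ℝ → ℝ} (h : LinearizedPair j f v φ)
    (hodd : ∀ s, f (-s) = -f s) {σ : ℝ} (hσ : σ = 1 ∨ σ = -1) (τ : ℝ) :
    LinearizedPair j f (fun r => σ * v r) (fun r => τ * φ r) := by
  have hfσ : ∀ s, f (σ * s) = σ * f s := by
    rcases hσ with rfl | rfl <;> simp [hodd]
  have hfσ' : ∀ s, deriv f (σ * s) = deriv f s := by
    rcases hσ with rfl | rfl <;> simp [deriv_neg_of_odd hodd]
  have dv : deriv (fun r => σ * v r) = fun r => σ * deriv v r :=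
    funext fun r => deriv_const_mul_field σ
  have dφ : deriv (fun r => τ * φ r) = fun r => τ * deriv φ r :=
    funext fun r => deriv_const_mul_field τ
  constructor
  · exact fun r hr => (h.diff r hr).const_mul σ
  · exact fun r hr => dv ▸ (h.diff_deriv r hr).const_mul σ
  · intro r hr
    rw [dv, deriv_const_mul_field, hfσ]
    linear_combination σ * h.eqn r hr
  · exact fun r hr => (h.lin_diff r hr).const_mul τ
  · exact fun r hr => dφ ▸ (h.lin_diff_deriv r hr).const_mul τ
  · intro r hr hv
    rw [dφ, deriv_const_mul_field, hfσ']
    linear_combination τ * h.lin_eqn r hr (right_ne_zero_of_mul hv)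

theorem Tk_nonneg (u : ℝ → ℝ → ℝ) (k : ℕ) (α : ℝ) : 0 ≤ Tk u k α := by
  induction k with
  | zero => exact le_rfl
  | succ k ih =>
    have hZ : 0 ≤ sSup (ZsetAux u (k + 1) (Tk u k α) α) :=
      Real.sSup_nonneg fun r hr => ih.trans hr.1.le
    exact Real.sInf_nonneg fun r hr => hZ.trans hr.1.le

/-- A positive `T_k` is a critical point, by continuity of the derivative. -/
theorem deriv_Tk_eq_zero {u : ℝ → ℝ → ℝ} {α : ℝ}
    (hc : ∀ r : ℝ, 0 < r → ContinuousAt (deriv (u α)) r) {k : ℕ} (hT : 0 < Tk u k α) :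
    deriv (u α) (Tk u k α) = 0 := by
  cases k with
  | zero => exact absurd hT (lt_irrefl 0)
  | succ k =>
    set S := {r | sSup (ZsetAux u (k + 1) (Tk u k α) α) < r ∧ deriv (u α) r = 0}
    have hTS : Tk u (k + 1) α = sInf S := rfl
    have hne : S.Nonempty := by
      by_contra hemp
      rw [hTS, not_nonempty_iff_eq_empty.1 hemp, Real.sInf_empty] at hT
      exact lt_irrefl 0 hT
    have hbdd : BddBelow S := ⟨_, fun r hr => hr.1.le⟩
    have hmem := csInf_mem_closure hne hbdd
    rw [← hTS] at hmem
    by_contra hcon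
    obtain ⟨r, hr1, hr2⟩ := mem_closure_iff_nhds.1 hmem _ ((hc _ hT).eventually_ne hcon)
    exact hr1 hr2.2

theorem pos_of_mem_Nk {u : ℝ → ℝ → ℝ} {k : ℕ} {α : ℝ} (h : α ∈ Nk u k) : 0 < α := by
  induction k with
  | zero => exact h
  | succ k ih =>
    cases k with
    | zero => exact h.1
    | succ k => exact ih h.1

theorem mem_Gk_elim {u : ℝ → ℝ → ℝ} {k : ℕ} {α : ℝ} (h : α ∈ Gk u k) :
    0 < α ∧ uAtZ u k α = 0 ∧ duAtZ u k α = 0 := by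
  match k, h with
  | 1, h => exact h
  | k + 2, h => exact ⟨pos_of_mem_Nk h.1, h.2.2⟩

/-- A continuous function without zeros on a preconnected set has a constant sign there. -/
theorem exists_pos_mul_of_ne_zero {s : Set ℝ} (hs : IsPreconnected s) {g : ℝ → ℝ}
    (hg : ContinuousOn g s) (h0 : ∀ x ∈ s, g x ≠ 0) : ∃ τ : ℝ, ∀ x ∈ s, 0 < τ * g x := by
  rcases s.eq_empty_or_nonempty with rfl | ⟨a, ha⟩
  · exact ⟨1, fun x hx => hx.elim⟩
  refine ⟨g a, fun x hx => ?_⟩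
  by_contra hcon
  have hprod : g a * g x ≤ 0 := not_lt.1 hcon
  have hga : 0 < g a * g a := mul_self_pos.2 (h0 a ha)
  obtain ⟨y, hy, hy0⟩ := hs.intermediate_value hx ha (continuousOn_const.mul hg) ⟨hprod, hga.le⟩
  exact (mul_ne_zero (h0 a ha) (h0 y hy)) hy0

/-- A positive function with negative derivative on a half-line converges at infinity. -/
theorem exists_tendsto_of_pos_of_deriv_neg {v : ℝ → ℝ} {T : ℝ} (hd : ∀ s, T < s → DifferentiableAt ℝ v s)
    (hpos : ∀ s, T < s → 0 < v s) (hdec : ∀ s, T < s → deriv v s < 0) :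
    ∃ l, Tendsto v atTop (nhds l) := by
  have hanti : AntitoneOn v (Ioi T) :=
    (strictAntiOn_of_deriv_neg (convex_Ioi T)
      (fun s hs => (hd s hs).continuousAt.continuousWithinAt)
      fun s hs => hdec s (interior_subset hs)).antitoneOn
  have hglob : Antitone fun r => v (max r (T + 1)) := fun x y hxy =>
    hanti (by simp) (by simp) (max_le_max_right _ hxy)
  have hbdd : BddBelow (range fun r => v (max r (T + 1))) := by
    refine ⟨0, ?_⟩
    rintro _ ⟨r, rfl⟩
    exact (hpos _ (by simp)).le
  refine ⟨_, (tendsto_atTop_ciInf hglob hbdd).congr' ?_⟩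
  filter_upwards [eventually_ge_atTop (T + 1)] with r hr
  rw [max_eq_left hr]

end Paper

/-- **Proposition 3.1 (ii).** If `α ∈ G_k` then `φ = ∂u/∂α` has at least one zero in
`(T_{k-1}(α), Z_k(α))` (with `T₀ = 0`, and including the case `Z_k(α) = ∞`). -/
theorem phi_zero_in_last_interval
    (n : ℕ) (hn : 2 ≤ n)
    (f : ℝ → ℝ) (b β : ℝ) (hf : Continuous f)
    (h1 : Hf1 f b β) (h2 : Hf2 f)
    (u : ℝ → ℝ → ℝ) (hu : Family n f u)
    (k : ℕ) (hk : 1 ≤ k) (α : ℝ) (hα : α ∈ Gk u k)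
    (φ : ℝ → ℝ)
    (hφc : ContinuousOn φ (Ici 0))
    (hφd : ∀ r : ℝ, 0 < r → DifferentiableAt ℝ φ r ∧ DifferentiableAt ℝ (deriv φ) r)
    (hφ0 : φ 0 = 1) (hφ'0 : deriv φ 0 = 0)
    (hφeq : ∀ r : ℝ, 0 < r → u α r ≠ 0 →
      deriv (deriv φ) r + ((n : ℝ) - 1) / r * deriv φ r + deriv f (u α r) * φ r = 0) :
    ∃ t, Tk u (k - 1) α < t ∧ (BddAbove (ZsetK u k α) → t < Zk u k α) ∧ φ t = 0 := by
  obtain ⟨hodd, hf0, hb, -, -, hfb, -, -⟩ := h1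
  obtain ⟨-, hfd, hfc, -⟩ := h2
  have hreg := fun s (hs : s ≠ 0) =>
    differentiableAt_and_continuousAt_deriv_of_odd hodd hfd hfc hs
  obtain ⟨hα0, huZ, hduZ⟩ := mem_Gk_elim hα
  obtain ⟨hu0, hdu0, huc, hud, hueq⟩ := hu.1 α hα0
  obtain ⟨j, rfl⟩ := Nat.exists_eq_add_of_le' hn
  have hcast : (((j + 2 : ℕ) : ℝ) - 1) = (j : ℝ) + 1 := by
    push_cast
    ring
  rw [hcast] at hueq hφeq
  have hpair : LinearizedPair j f (u α) φ :=
    ⟨fun r hr => (hud r hr).1, fun r hr => (hud r hr).2, hueq, fun r hr => (hφd r hr).1,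
      fun r hr => (hφd r hr).2, hφeq⟩
  have hdulim : Tendsto (deriv (u α)) (nhdsWithin 0 (Ioi 0)) (nhds 0) := by
    have hmaps : MapsTo (fun r : ℝ => (α, r)) (Ici 0) (Ioi 0 ×ˢ Ici 0) := fun r hr => ⟨hα0, hr⟩
    have hc : ContinuousOn (deriv (u α)) (Ici 0) := hu.2.2.comp (by fun_prop) hmaps
    have := (hc 0 self_mem_Ici).mono_left (nhdsWithin_mono _ Ioi_subset_Ici_self)
    rwa [hdu0] at this
  set T := Tk u (k - 1) α
  have hT : 0 ≤ T := Tk_nonneg u (k - 1) α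
  have hcrit : 0 < T → deriv (u α) T = 0 :=
    deriv_Tk_eq_zero fun r hr => (hud r hr).2.continuousAt
  obtain ⟨σ, hσdef⟩ : ∃ σ : ℝ, σ = -(-1 : ℝ) ^ k := ⟨_, rfl⟩
  have hσ : σ = 1 ∨ σ = -1 := by
    rcases neg_one_pow_eq_or ℝ k with h | h <;> simp [hσdef, h]
  have hσ0 : σ ≠ 0 := by rcases hσ with h | h <;> simp [h]
  have hdσ : deriv (fun r => σ * u α r) = fun r => σ * deriv (u α) r :=
    funext fun r => deriv_const_mul_field σ
  have hlimW : ∀ τ Z : ℝ, T < Z → (∀ s ∈ Ioo T Z, σ * deriv (u α) s < 0) →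
      (∀ s ∈ Ioo T Z, 0 < τ * φ s) → ∃ L, 0 ≤ L ∧
        Tendsto (wronskian j f (fun r => σ * u α r) fun r => τ * φ r)
          (nhdsWithin T (Ioi T)) (nhds L) := by
    intro τ Z hTZ hdec hpos
    rcases hT.eq_or_lt with h0 | h0
    · rw [← h0]
      have hv0 : σ * u α 0 ≠ 0 := mul_ne_zero hσ0 (by rw [hu0]; exact hα0.ne')
      refine ⟨0, le_rfl, (hpair.smul hodd hσ τ).tendsto_wronskian_zero hf
        (continuousOn_const.mul huc) hv0 (hreg _ hv0).2 (continuousOn_const.mul hφc) ?_⟩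
      rw [hdσ]
      simpa using hdulim.const_mul σ
    · refine (hpair.smul hodd hσ τ).tendsto_wronskian_critical hf h0 hTZ ?_ ?_ hpos
      · simp [hdσ, hcrit h0]
      · simpa [hdσ] using hdec
  by_contra hno
  push Not at hno
  by_cases hbdd : BddAbove (ZsetK u k α)
  · rw [uAtZ, if_pos hbdd] at huZ
    rw [duAtZ, if_pos hbdd] at hduZ
    have hZ : Zk u k α = sSup (ZsetK u k α) := by
      obtain ⟨i, rfl⟩ := Nat.exists_eq_add_of_le' hk
      rfl
    set Z := Zk u k α
    have hne : (ZsetK u k α).Nonempty := by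
      by_contra hemp
      rw [not_nonempty_iff_eq_empty.1 hemp, Real.sSup_empty] at hZ
      rw [hZ, hu0] at huZ
      exact hα0.ne' huZ
    have hTZ : T < Z := by
      obtain ⟨r, hr⟩ := hne
      exact hr.1.trans_le (hZ ▸ le_csSup hbdd hr)
    have hsign : ∀ s ∈ Ioo T Z, 0 < σ * u α s ∧ σ * deriv (u α) s < 0 := by
      intro s hs
      obtain ⟨r, hr, hsr⟩ := exists_lt_of_lt_csSup hne (hZ ▸ hs.2)
      have := hr.2 s ⟨hs.1, hsr⟩
      rw [hσdef]
      constructor <;> linarith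
    obtain ⟨τ, hτ⟩ := exists_pos_mul_of_ne_zero isPreconnected_Ioo
      (hφc.mono fun s (hs : s ∈ Ioo T Z) => hT.trans hs.1.le)
      fun s hs => hno s hs.1 fun _ => hs.2
    obtain ⟨L, hL, hlim⟩ := hlimW τ Z hTZ (fun s hs => (hsign s hs).2) hτ
    exact (hpair.smul hodd hσ τ).false_of_double_zero hf hf0 (fun s hs => (hreg s hs).1) hT hTZ
      (fun s hs => (hsign s hs).1) (by simpa [hdσ] using fun s hs => (hsign s hs).2) hτ hL hlim
      (by simp [huZ]) (by simp [hdσ, hduZ])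
  · rw [uAtZ, if_neg hbdd] at huZ
    have hsign : ∀ s, T < s → 0 < σ * u α s ∧ σ * deriv (u α) s < 0 := by
      intro s hs
      obtain ⟨r, hr, hsr⟩ := not_bddAbove_iff.1 hbdd s
      have := hr.2 s ⟨hs, hsr⟩
      rw [hσdef]
      constructor <;> linarith
    obtain ⟨τ, hτ⟩ := exists_pos_mul_of_ne_zero isPreconnected_Ioi
      (hφc.mono fun s (hs : s ∈ Ioi T) => hT.trans (le_of_lt hs))
      fun s hs => hno s hs fun h => absurd h hbdd
    obtain ⟨L, hL, hlim⟩ := hlimW τ (T + 1) (by linarith) (fun s hs => (hsign s hs.1).2)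
      fun s hs => hτ s hs.1
    have hdec : ∀ s, T < s → deriv (fun r => σ * u α r) s < 0 := by
      simpa [hdσ] using fun s hs => (hsign s hs).2
    obtain ⟨l, hl⟩ := exists_tendsto_of_pos_of_deriv_neg
      (fun s hs => (hpair.smul hodd hσ τ).diff s (hT.trans_lt hs)) (fun s hs => (hsign s hs).1) hdec
    have hul : Tendsto (u α) atTop (nhds (σ⁻¹ * l)) :=
      (hl.const_mul σ⁻¹).congr fun r => by rw [inv_mul_cancel_left₀ hσ0]
    rw [hul.limUnder_eq] at huZ
    have hl0 : l = 0 := (mul_eq_zero.1 huZ).resolve_left (inv_ne_zero hσ0)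
    exact (hpair.smul hodd hσ τ).false_of_tendsto_zero (fun s hs => (hreg s hs).1) hb hfb hT
      (fun s hs => (hsign s hs).1) hdec hτ hL hlim (hl0 ▸ hl)
end

section
/- Assume f satisfies (f1), (f2), and (f3): f(s) ≥ f'(s)(s−β) for all s ≥ β. Let α > β, let u = u(·,α), and let R > 0 be the first point with u(R) = β (so u > β on [0,R)). Let φ be a C¹ function on [0,∞) with φ(0) = 1, φ'(0) = 0, satisfying the linearized equation φ''(r) + ((n−1)/r)φ'(r) + f'(u(r))φ(r) = 0 for r ∈ (0,R). Then φ(r) > 0 for all r ∈ (0,R). -/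
open Set Filter MeasureTheory

open Paper Set Filter MeasureTheory

/-- A nondecreasing `W` is nonnegative if `W / p` is the derivative of a function having a finite
limit at `0⁺`, where the weight `p > 0` vanishes at least linearly at `0`. -/
theorem nonneg_of_monotoneOn_of_hasDerivAt_div {q W p : ℝ → ℝ} {z K l : ℝ}
    (hW : MonotoneOn W (Ioo 0 z)) (hq : Tendsto q (nhdsWithin 0 (Ioi 0)) (nhds l))
    (hderiv : ∀ r ∈ Ioo 0 z, HasDerivAt q (W r / p r) r)
    (hp : ∀ r ∈ Ioo 0 z, 0 < p r ∧ p r ≤ K * r) :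
    ∀ r ∈ Ioo 0 z, 0 ≤ W r := by
  intro r₀ hr₀
  by_contra! hneg
  have hK : 0 < K := pos_of_mul_pos_left ((hp r₀ hr₀).1.trans_le (hp r₀ hr₀).2) hr₀.1.le
  have hsub : ∀ r ∈ Ioc 0 r₀, r ∈ Ioo 0 z := fun r hr => ⟨hr.1, hr.2.trans_lt hr₀.2⟩
  set C := -W r₀ / K
  have hC : 0 < C := div_pos (neg_pos.2 hneg) hK
  have hg : ∀ r ∈ Ioc 0 r₀,
      HasDerivAt (fun r => q r + C * Real.log r) (W r / p r + C * r⁻¹) r := fun r hr =>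
    (hderiv r (hsub r hr)).add ((Real.hasDerivAt_log hr.1.ne').const_mul C)
  have hanti : AntitoneOn (fun r => q r + C * Real.log r) (Ioc 0 r₀) := by
    apply antitoneOn_of_deriv_nonpos (convex_Ioc 0 r₀)
    · exact fun r hr => (hg r hr).continuousAt.continuousWithinAt
    · exact fun r hr => (hg r (interior_subset hr)).differentiableAt.differentiableWithinAt
    · intro r hr
      replace hr := interior_subset hr
      rw [(hg r hr).deriv]
      obtain ⟨hp0, hpK⟩ := hp r (hsub r hr)
      have hWr : W r ≤ W r₀ := hW (hsub r hr) hr₀ hr.2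
      have h1 : W r / p r ≤ W r₀ / p r := by gcongr
      have h2 : -W r₀ / (K * r) ≤ -W r₀ / p r :=
        div_le_div_of_nonneg_left (neg_pos.2 hneg).le hp0 hpK
      have h3 : C * r⁻¹ = -W r₀ / (K * r) := by
        rw [← div_eq_mul_inv, div_div]
      rw [neg_div (p r)] at h2
      linarith
  have hbot : Tendsto (fun r => q r + C * Real.log r) (nhdsWithin 0 (Ioi 0)) atBot :=
    hq.add_atBot (Real.tendsto_log_nhdsGT_zero.const_mul_atBot hC)
  have hlt := hbot.eventually_lt_atBot (q r₀ + C * Real.log r₀)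
  obtain ⟨r, hr, hrI⟩ := (hlt.and (Ioc_mem_nhdsGT hr₀.1)).exists
  exact (hanti hrI ⟨hr₀.1, le_rfl⟩ hrI.2).not_gt hr

/-- The derivative of the weighted Wronskian of two solutions of radial equations. -/
theorem hasDerivAt_radial_wronskian {k : ℕ} {φ v : ℝ → ℝ} {r a c : ℝ} (hr : r ≠ 0)
    (hφ : DifferentiableAt ℝ φ r) (hφ' : DifferentiableAt ℝ (deriv φ) r)
    (hv : DifferentiableAt ℝ v r) (hv' : DifferentiableAt ℝ (deriv v) r)
    (hφeq : deriv (deriv φ) r + (k + 1) / r * deriv φ r + a = 0)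
    (hveq : deriv (deriv v) r + (k + 1) / r * deriv v r + c = 0) :
    HasDerivAt (fun r => r ^ (k + 1) * (deriv φ r * v r - φ r * deriv v r))
      (r ^ (k + 1) * (φ r * c - a * v r)) r := by
  refine ((hasDerivAt_pow (k + 1) r).fun_mul ((hφ'.hasDerivAt.fun_mul hv.hasDerivAt).fun_sub
    (hφ.hasDerivAt.fun_mul hv'.hasDerivAt))).congr_deriv ?_
  rw [show deriv (deriv φ) r = -((k + 1) / r * deriv φ r + a) by linarith,
    show deriv (deriv v) r = -((k + 1) / r * deriv v r + c) by linarith]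
  rw [Nat.add_sub_cancel]
  push_cast
  field_simp
  ring

/-- **Proposition 3.2.** Under (f1)–(f3), `φ` is strictly positive on `(0, r(β,α))`. -/
theorem phi_positive_before_beta
    (n : ℕ) (hn : 2 ≤ n)
    (f : ℝ → ℝ) (b β : ℝ) (hf : Continuous f)
    (h1 : Hf1 f b β) (h2 : Hf2 f) (h3 : Hf3 f β)
    (α : ℝ) (hα : β < α)
    (u : ℝ → ℝ) (hu : IVPsol n f α u)
    (R : ℝ) (hR : 0 < R) (huR : u R = β) (hfirst : ∀ r ∈ Ico (0:ℝ) R, β < u r)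
    (φ : ℝ → ℝ)
    (hφc : ContinuousOn φ (Ici 0))
    (hφd : ∀ r : ℝ, 0 < r → DifferentiableAt ℝ φ r ∧ DifferentiableAt ℝ (deriv φ) r)
    (hφ0 : φ 0 = 1) (hφ'0 : deriv φ 0 = 0)
    (hφeq : ∀ r ∈ Ioo (0:ℝ) R,
      deriv (deriv φ) r + ((n : ℝ) - 1) / r * deriv φ r + deriv f (u r) * φ r = 0) :
    ∀ r ∈ Ioo (0:ℝ) R, 0 < φ r := by
  obtain ⟨k, rfl⟩ := Nat.exists_eq_add_of_le' hn
  obtain ⟨-, -, huc, hud, hueq⟩ := hu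
  have hcoef : (((k + 2 : ℕ) : ℝ) - 1) = k + 1 := by push_cast; ring
  rw [hcoef] at hφeq hueq
  by_contra! hcon
  obtain ⟨r₁, hr₁, hφr₁⟩ := hcon
  have hφc₁ : ContinuousOn φ (Icc 0 r₁) := hφc.mono Icc_subset_Ici_self
  -- `z` is the first zero of `φ`
  obtain ⟨z, ⟨hzI, hφz⟩, hzmin⟩ :=
    (hφc₁.lowerSemicontinuousOn.isCompact_inter_preimage_Iic isCompact_Icc 0).exists_isLeast
      ⟨r₁, ⟨hr₁.1.le, le_rfl⟩, hφr₁⟩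
  have hz0 : 0 < z := by
    refine hzI.1.lt_of_ne fun h => ?_
    rw [mem_preimage, mem_Iic, ← h, hφ0] at hφz
    linarith
  have hzR : z < R := hzI.2.trans_lt hr₁.2
  have hφpos : ∀ r ∈ Ioo 0 z, 0 < φ r := by
    intro r hr
    by_contra! hle
    exact (hzmin ⟨⟨hr.1.le, hr.2.le.trans hzI.2⟩, hle⟩).not_gt hr.2
  have hvpos : ∀ r ∈ Icc 0 z, 0 < u r - β := fun r hr =>
    sub_pos.2 (hfirst r ⟨hr.1, hr.2.trans_lt hzR⟩)
  have hvc : ContinuousOn (fun r => u r - β) (Icc 0 z) :=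
    (huc.mono Icc_subset_Ici_self).sub continuousOn_const
  have hqc : ContinuousOn (fun r => φ r / (u r - β)) (Icc 0 z) :=
    (hφc.mono Icc_subset_Ici_self).div hvc fun r hr => (hvpos r hr).ne'
  set W : ℝ → ℝ := fun r => r ^ (k + 1) * (deriv φ r * (u r - β) - φ r * deriv u r)
  have hWd : ∀ r ∈ Ioo 0 z, HasDerivAt W
      (r ^ (k + 1) * (φ r * f (u r) - deriv f (u r) * φ r * (u r - β))) r := by
    intro r hr
    have hdv : deriv (fun r => u r - β) = deriv u := funext fun _ => deriv_sub_const β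
    have hrR : r ∈ Ioo 0 R := ⟨hr.1, hr.2.trans hzR⟩
    have h := hasDerivAt_radial_wronskian (v := fun r => u r - β) hr.1.ne'
      (hφd r hr.1).1 (hφd r hr.1).2 ((hud r hr.1).1.sub_const β)
      (hdv ▸ (hud r hr.1).2) (hφeq r hrR) (hdv.symm ▸ hueq r hr.1)
    rwa [hdv] at h
  have hWmono : MonotoneOn W (Ioo 0 z) := by
    apply monotoneOn_of_deriv_nonneg (convex_Ioo 0 z)
    · exact fun r hr => (hWd r hr).continuousAt.continuousWithinAt
    · exact fun r hr => (hWd r (interior_subset hr)).differentiableAt.differentiableWithinAt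
    · intro r hr
      replace hr := interior_subset hr
      rw [(hWd r hr).deriv]
      have h := h3 (u r) (hfirst r ⟨hr.1.le, hr.2.trans hzR⟩).le
      have h' := mul_nonneg (hφpos r hr).le (sub_nonneg.2 h)
      exact mul_nonneg (pow_nonneg hr.1.le _) (by linarith)
  have hqd : ∀ r ∈ Ioo 0 z, HasDerivAt (fun r => φ r / (u r - β))
      (W r / (r ^ (k + 1) * (u r - β) ^ 2)) r := by
    intro r hr
    exact ((hφd r hr.1).1.hasDerivAt.fun_div ((hud r hr.1).1.hasDerivAt.sub_const β)
      (hvpos r (Ioo_subset_Icc_self hr)).ne').congr_deriv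
      (mul_div_mul_left _ _ (pow_pos hr.1 _).ne').symm
  obtain ⟨M, hM⟩ := isCompact_Icc.bddAbove_image hvc
  have hMr : ∀ r ∈ Icc 0 z, u r - β ≤ M := fun r hr => hM (mem_image_of_mem _ hr)
  have hp : ∀ r ∈ Ioo 0 z, 0 < r ^ (k + 1) * (u r - β) ^ 2 ∧
      r ^ (k + 1) * (u r - β) ^ 2 ≤ z ^ k * M ^ 2 * r := by
    intro r hr
    have hv := hvpos r (Ioo_subset_Icc_self hr)
    have hvM := hMr r (Ioo_subset_Icc_self hr)
    have hr0 := hr.1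
    refine ⟨by positivity, ?_⟩
    calc r ^ (k + 1) * (u r - β) ^ 2 = r ^ k * (u r - β) ^ 2 * r := by ring
      _ ≤ z ^ k * M ^ 2 * r := by gcongr; exact hr.2.le
  have hqlim : ContinuousWithinAt (fun r => φ r / (u r - β)) (Ioi 0) 0 :=
    (hqc 0 ⟨le_rfl, hz0.le⟩).mono_of_mem_nhdsWithin (Icc_mem_nhdsGT hz0)
  have hWnonneg := nonneg_of_monotoneOn_of_hasDerivAt_div hWmono hqlim.tendsto hqd hp
  have hqmono : MonotoneOn (fun r => φ r / (u r - β)) (Icc 0 z) := by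
    apply monotoneOn_of_deriv_nonneg (convex_Icc 0 z) hqc
    all_goals rw [interior_Icc]; intro r hr
    · exact (hqd r hr).differentiableAt.differentiableWithinAt
    · rw [(hqd r hr).deriv]
      exact div_nonneg (hWnonneg r hr) (hp r hr).1.le
  have h0 : 0 < φ 0 / (u 0 - β) := by
    rw [hφ0]
    exact one_div_pos.2 (hvpos 0 ⟨le_rfl, hz0.le⟩)
  have hle := hqmono ⟨le_rfl, hz0.le⟩ ⟨hz0.le, le_rfl⟩ hz0.le
  exact (h0.trans_le hle).not_ge
    (div_nonpos_of_nonpos_of_nonneg hφz (hvpos z ⟨hz0.le, le_rfl⟩).le)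
end
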